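/- Let F₄ = GF(4), let n be odd, let g₁, g₂ be monic divisors of Xⁿ−1 in F₄[X], and let ν ∈ F₄[X]. For all c, s ∈ F₄[X], the Hermitian inner product in F₄^{2n} satisfies ⟨([−ν̄·c·g₁^{⊥h}]ₙ, [c·g₁^{⊥h}]ₙ), ([s·g₂^{⊥h}]ₙ, [−ν̄·s·g₂^{⊥h}]ₙ)⟩_h = −⟨[c·(ν+ν̄)·g₁^{⊥h}]ₙ, [s·g₂^{⊥h}]ₙ⟩_h, where the inner product of a pair in F₄ⁿ × F₄ⁿ is the sum of the Hermitian inner products of the two components. -/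

import Mathlib

open Polynomial

set_option synthInstance.maxHeartbeats 1000000
set_option maxHeartbeats 1000000

noncomputable section

/-- The field `F₄ = GF(4)`. -/
abbrev F4 : Type := GaloisField 2 2

/-- The coefficient vector `[p]ₙ ∈ F₄ⁿ` of the remainder of `p` modulo `Xⁿ - 1`
(coefficient of `X^i` in position `i`). -/
def coeffVec (n : ℕ) (p : Polynomial F4) : Fin n → F4 :=
  fun i => (p % (X ^ n - 1)).coeff i

/-- The Hermitian inner product `⟨u,v⟩_h = ∑ i, u i * (v i)²` on `F₄^m`. -/
def hermInner {m : ℕ} (u v : Fin m → F4) : F4 := ∑ i, u i * (v i) ^ 2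

/-- The Hermitian inner product on `F₄ⁿ × F₄ⁿ`: the sum of the Hermitian inner
products of the two components. -/
def hermInner2 {n : ℕ} (u v : (Fin n → F4) × (Fin n → F4)) : F4 :=
  hermInner u.1 v.1 + hermInner u.2 v.2

/-- The conjugate transform `f̄ := f₀² + ∑_{i=1}^{n-1} f_i² X^{n-i}`, where `f` is first
reduced modulo `Xⁿ - 1`. -/
def conjT (n : ℕ) (f : Polynomial F4) : Polynomial F4 :=
  C (((f % (X ^ n - 1)).coeff 0) ^ 2) +
    ∑ i ∈ Finset.Ico 1 n, C (((f % (X ^ n - 1)).coeff i) ^ 2) * X ^ (n - i)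

/-- The Hermitian dual generator `g^{⊥h}(X) := ∑_{j=0}^{deg h} (h_j)² X^{deg h - j}`,
the conjugate reciprocal of the check polynomial `h = (Xⁿ-1)/g`. -/
def dualGen (n : ℕ) (g : Polynomial F4) : Polynomial F4 :=
  ∑ j ∈ Finset.range (((X ^ n - 1) / g).natDegree + 1),
    C ((((X ^ n - 1) / g).coeff j) ^ 2) * X ^ (((X ^ n - 1) / g).natDegree - j)

lemma hermInner_add_right {m : ℕ} (u v w : Fin m → F4) :
    hermInner u (v + w) = hermInner u v + hermInner u w := by
  simp only [hermInner, Pi.add_apply]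
  rw [← Finset.sum_add_distrib]
  refine Finset.sum_congr rfl fun i _ => ?_
  rw [add_pow_char (v i) (w i) 2, mul_add]

lemma hermInner_smul_right {m : ℕ} (c : F4) (u v : Fin m → F4) :
    hermInner u (c • v) = c ^ 2 * hermInner u v := by
  simp only [hermInner, Pi.smul_apply, smul_eq_mul, mul_pow, Finset.mul_sum]
  exact Finset.sum_congr rfl fun i _ => by ring

/-- The Hermitian dual code `C^{⊥h} = {v | ∀ u ∈ C, ⟨u,v⟩_h = 0}` of a linear code in `F₄^m`. -/
def hermDual {m : ℕ} (Ccode : Submodule F4 (Fin m → F4)) : Submodule F4 (Fin m → F4) where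
  carrier := {v | ∀ u ∈ Ccode, hermInner u v = 0}
  zero_mem' := by intro u _; simp [hermInner]
  add_mem' := by
    intro v w hv hw u hu
    rw [hermInner_add_right, hv u hu, hw u hu, add_zero]
  smul_mem' := by
    intro c v hv u hu
    rw [hermInner_smul_right, hv u hu, mul_zero]

lemma hermInner2_add_right {n : ℕ} (u v w : (Fin n → F4) × (Fin n → F4)) :
    hermInner2 u (v + w) = hermInner2 u v + hermInner2 u w := by
  simp only [hermInner2, Prod.fst_add, Prod.snd_add, hermInner_add_right]
  ring

lemma hermInner2_smul_right {n : ℕ} (c : F4) (u v : (Fin n → F4) × (Fin n → F4)) :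
    hermInner2 u (c • v) = c ^ 2 * hermInner2 u v := by
  simp only [hermInner2, Prod.smul_fst, Prod.smul_snd, hermInner_smul_right]
  ring

/-- The Hermitian dual code of a linear code in `F₄ⁿ × F₄ⁿ` (identified with `F₄^{2n}`). -/
def hermDualPair {n : ℕ} (Ccode : Submodule F4 ((Fin n → F4) × (Fin n → F4))) :
    Submodule F4 ((Fin n → F4) × (Fin n → F4)) where
  carrier := {v | ∀ u ∈ Ccode, hermInner2 u v = 0}
  zero_mem' := by intro u _; simp [hermInner2, hermInner]
  add_mem' := by
    intro v w hv hw u hu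
    rw [hermInner2_add_right, hv u hu, hw u hu, add_zero]
  smul_mem' := by
    intro c v hv u hu
    rw [hermInner2_smul_right, hv u hu, mul_zero]

/-- Hamming weight of a vector. -/
def hammingWt {m : ℕ} (u : Fin m → F4) : ℕ := Nat.card {i : Fin m // u i ≠ 0}

/-- The 2-generator quasi-cyclic code `C(g₁,g₂,ν)` of length `2n` and index 2:
the `F₄`-span of all `([a·ν·g₁]ₙ, [a·g₁]ₙ)` and `([b·g₂]ₙ, [b·ν·g₂]ₙ)`. -/
def Cqc (n : ℕ) (g₁ g₂ ν : Polynomial F4) : Submodule F4 ((Fin n → F4) × (Fin n → F4)) :=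
  Submodule.span F4
    ({x | ∃ a : Polynomial F4, x = (coeffVec n (a * ν * g₁), coeffVec n (a * g₁))} ∪
     {x | ∃ b : Polynomial F4, x = (coeffVec n (b * g₂), coeffVec n (b * ν * g₂))})

/-- The quasi-cyclic code `D`: the `F₄`-span of all `([-ν̄·c·g₁^{⊥h}]ₙ, [c·g₁^{⊥h}]ₙ)`
and `([s·g₂^{⊥h}]ₙ, [-ν̄·s·g₂^{⊥h}]ₙ)`. -/
def Dqc (n : ℕ) (g₁ g₂ ν : Polynomial F4) : Submodule F4 ((Fin n → F4) × (Fin n → F4)) :=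
  Submodule.span F4
    ({x | ∃ c : Polynomial F4,
        x = (coeffVec n (-(conjT n ν) * c * dualGen n g₁), coeffVec n (c * dualGen n g₁))} ∪
     {x | ∃ s : Polynomial F4,
        x = (coeffVec n (s * dualGen n g₂), coeffVec n (-(conjT n ν) * s * dualGen n g₂))})

/-- The quotient ring `R = F₄[X]/(Xⁿ - 1)`. -/
abbrev Rng (n : ℕ) : Type := Polynomial F4 ⧸ Ideal.span ({X ^ n - 1} : Set (Polynomial F4))

/-- The natural projection `F₄[X] → R`. -/
def toRng (n : ℕ) : Polynomial F4 →+* Rng n := Ideal.Quotient.mk _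

/-- The `R`-linear map `R → R × R`, `a ↦ (a·û, a·v̂)`, where `û, v̂` are the images of
`u, v` in `R`. -/
def qcMap (n : ℕ) (u v : Polynomial F4) : Rng n →ₗ[Rng n] Rng n × Rng n :=
  (LinearMap.toSpanSingleton (Rng n) (Rng n) (toRng n u)).prod
    (LinearMap.toSpanSingleton (Rng n) (Rng n) (toRng n v))

lemma cv_congr (n : ℕ) {p q : Polynomial F4} (h : (X ^ n - 1 : Polynomial F4) ∣ p - q) :
    coeffVec n p = coeffVec n q := by
  funext i
  unfold coeffVec
  have : p % (X ^ n - 1) = q % (X ^ n - 1) := by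
    have h1 : (p - q) % (X ^ n - 1) = 0 := (EuclideanDomain.mod_eq_zero).2 h
    rw [Polynomial.sub_mod] at h1
    exact sub_eq_zero.1 h1
  rw [this]

lemma cv_add (n : ℕ) (p q : Polynomial F4) :
    coeffVec n (p + q) = coeffVec n p + coeffVec n q := by
  funext i
  simp [coeffVec, Polynomial.add_mod]

lemma cv_neg (n : ℕ) (p : Polynomial F4) : coeffVec n (-p) = - coeffVec n p := by
  have h := cv_add n p (-p)
  have h0 : coeffVec n 0 = 0 := by funext i; simp [coeffVec]
  rw [add_neg_cancel, h0] at h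
  exact (neg_eq_of_add_eq_zero_right h.symm).symm

lemma cv_monomial (n : ℕ) (hn : 0 < n) (k : ℕ) (a : F4) (i : Fin n) :
    coeffVec n (C a * X ^ k) i = if (i : ℕ) = k % n then a else 0 := by
  have hd : (X ^ n - 1 : Polynomial F4) ∣ C a * X ^ k - C a * X ^ (k % n) := by
    have h1 : (X ^ n - 1 : Polynomial F4) ∣ (X ^ n) ^ (k / n) - 1 := by
      simpa using sub_dvd_pow_sub_pow (X ^ n : Polynomial F4) 1 (k / n)
    have h2 : C a * X ^ k - C a * X ^ (k % n)
        = ((X ^ n) ^ (k / n) - 1 : Polynomial F4) * (C a * X ^ (k % n)) := by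
      have : (X : Polynomial F4) ^ k = (X ^ n) ^ (k / n) * X ^ (k % n) := by
        rw [← pow_mul, ← pow_add, Nat.div_add_mod]
      rw [this]; ring
    rw [h2]
    exact h1.mul_right _
  rw [cv_congr n hd]
  unfold coeffVec
  have hne : (X ^ n - 1 : Polynomial F4) ≠ 0 := (monic_X_pow_sub_C 1 hn.ne').ne_zero
  have hm : (C a * X ^ (k % n)) % (X ^ n - 1 : Polynomial F4) = C a * X ^ (k % n) := by
    rw [Polynomial.mod_eq_self_iff hne]
    have : (X ^ n - 1 : Polynomial F4).degree = n := degree_X_pow_sub_C hn 1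
    rw [this]
    refine (degree_C_mul_X_pow_le _ _).trans_lt ?_
    exact_mod_cast Nat.mod_lt k hn
  rw [hm, coeff_C_mul_X_pow]

lemma hi_add_left {m : ℕ} (u v w : Fin m → F4) :
    hermInner (u + v) w = hermInner u w + hermInner v w := by
  simp only [hermInner, Pi.add_apply, add_mul, Finset.sum_add_distrib]

lemma hi_neg_left {m : ℕ} (u v : Fin m → F4) : hermInner (-u) v = - hermInner u v := by
  simp [hermInner]

lemma hi_neg_right {m : ℕ} (u v : Fin m → F4) : hermInner u (-v) = - hermInner u v := by
  have h := hermInner_add_right u v (-v)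
  have h0 : hermInner u 0 = 0 := by simp [hermInner]
  rw [add_neg_cancel, h0] at h
  exact (neg_eq_of_add_eq_zero_right h.symm).symm

lemma hi_monomial (n : ℕ) (hn : 0 < n) (j k : ℕ) (a b : F4) :
    hermInner (coeffVec n (C a * X ^ j)) (coeffVec n (C b * X ^ k))
      = if j % n = k % n then a * b ^ 2 else 0 := by
  unfold hermInner
  simp only [cv_monomial n hn]
  rw [Finset.sum_eq_single (⟨j % n, Nat.mod_lt j hn⟩ : Fin n)]
  · simp only [if_true]
    split_ifs <;> simp
  · intro i _ hi
    have : (i : ℕ) ≠ j % n := fun h => hi (Fin.ext h)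
    simp [this]
  · simp

lemma hi_shift (n : ℕ) (hn : 0 < n) (a : F4) (i : ℕ) (hi : i ≤ n) (P Q : Polynomial F4) :
    hermInner (coeffVec n P) (coeffVec n (C (a ^ 2) * X ^ (n - i) * Q))
      = hermInner (coeffVec n (C a * X ^ i * P)) (coeffVec n Q) := by
  have ha : (a ^ 2) ^ 2 = a := by
    have hc : Nat.card F4 = 4 := by
      have := GaloisField.card 2 2 (by norm_num)
      simpa using this
    haveI : Fintype F4 := Fintype.ofFinite _
    have := FiniteField.pow_card a
    rw [← Nat.card_eq_fintype_card, hc] at this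
    rw [← pow_mul]
    exact this
  induction P using Polynomial.induction_on' with
  | add p q hp hq => rw [cv_add, hi_add_left, hp, hq, mul_add, cv_add, hi_add_left]
  | monomial j b =>
    induction Q using Polynomial.induction_on' with
    | add p q hp hq =>
      rw [mul_add, cv_add, hermInner_add_right, hp, hq, cv_add, hermInner_add_right]
    | monomial k d =>
      rw [← C_mul_X_pow_eq_monomial, ← C_mul_X_pow_eq_monomial]
      have e1 : C (a ^ 2) * X ^ (n - i) * (C d * X ^ k)
          = (C (a ^ 2 * d) * X ^ (n - i + k) : Polynomial F4) := by
        rw [C_mul, pow_add]; ring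
      have e2 : C a * X ^ i * (C b * X ^ j) = (C (a * b) * X ^ (i + j) : Polynomial F4) := by
        rw [C_mul, pow_add]; ring
      rw [e1, e2, hi_monomial n hn, hi_monomial n hn]
      have key : (j % n = (n - i + k) % n) ↔ ((i + j) % n = k % n) := by
        change j ≡ n - i + k [MOD n] ↔ i + j ≡ k [MOD n]
        have h3 : i + (n - i + k) = n + k := by omega
        have h4 : n + k ≡ k [MOD n] := by simp [Nat.ModEq]
        constructor
        · intro h
          have := Nat.ModEq.add_left i h
          rw [h3] at this
          exact this.trans h4
        · intro h
          apply Nat.ModEq.add_left_cancel' i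
          rw [h3]
          exact h.trans h4.symm
      simp only [key, mul_pow, ha]
      split_ifs
      · ring
      · rfl

lemma cv_sum {ι : Type*} (n : ℕ) (s : Finset ι) (f : ι → Polynomial F4) :
    coeffVec n (∑ i ∈ s, f i) = ∑ i ∈ s, coeffVec n (f i) :=
  map_sum (AddMonoidHom.mk' (coeffVec n) (cv_add n)) f s

lemma hi_sum_left {ι : Type*} {m : ℕ} (s : Finset ι) (f : ι → Fin m → F4) (v : Fin m → F4) :
    hermInner (∑ i ∈ s, f i) v = ∑ i ∈ s, hermInner (f i) v :=
  map_sum (AddMonoidHom.mk' (fun u => hermInner u v) (fun a b => hi_add_left a b v)) f s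

lemma hi_sum_right {ι : Type*} {m : ℕ} (s : Finset ι) (f : ι → Fin m → F4) (v : Fin m → F4) :
    hermInner v (∑ i ∈ s, f i) = ∑ i ∈ s, hermInner v (f i) :=
  map_sum (AddMonoidHom.mk' (fun u => hermInner v u) (hermInner_add_right v)) f s

lemma hi_adj (n : ℕ) (hn : 0 < n) (ν P Q : Polynomial F4) :
    hermInner (coeffVec n P) (coeffVec n (conjT n ν * Q))
      = hermInner (coeffVec n (ν * P)) (coeffVec n Q) := by
  set r := ν % (X ^ n - 1) with hr
  have hne : (X ^ n - 1 : Polynomial F4) ≠ 0 := (monic_X_pow_sub_C 1 hn.ne').ne_zero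
  have hdeg : r.degree < n := by
    have : (X ^ n - 1 : Polynomial F4).degree = n := degree_X_pow_sub_C hn 1
    rw [← this]
    exact EuclideanDomain.mod_lt ν hne
  have h1 : coeffVec n (ν * P) = coeffVec n (∑ i ∈ Finset.range n, C (r.coeff i) * X ^ i * P) := by
    apply cv_congr
    have : r = ∑ i ∈ Finset.range n, C (r.coeff i) * X ^ i := by
      by_cases h0 : r = 0
      · simp [h0]
      · exact as_sum_range_C_mul_X_pow' _ ((natDegree_lt_iff_degree_lt h0).2 hdeg)
    rw [← Finset.sum_mul, ← this, ← sub_mul]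
    apply Dvd.dvd.mul_right
    exact ⟨ν / (X ^ n - 1), by rw [hr]; nth_rewrite 1 [← EuclideanDomain.div_add_mod ν (X ^ n - 1)]; ring⟩
  have h2 : coeffVec n (conjT n ν * Q)
      = coeffVec n (∑ i ∈ Finset.range n, C (r.coeff i ^ 2) * X ^ (n - i) * Q) := by
    apply cv_congr
    rw [← Finset.sum_mul, ← sub_mul]
    apply Dvd.dvd.mul_right
    rw [Finset.range_eq_Ico, Finset.sum_eq_sum_Ico_succ_bot hn]
    unfold conjT
    rw [← hr]
    exact ⟨-C (r.coeff 0 ^ 2), by simp only [Nat.sub_zero, zero_add]; ring⟩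
  rw [h1, h2, cv_sum, cv_sum, hi_sum_left, hi_sum_right]
  refine Finset.sum_congr rfl fun i hi => ?_
  exact hi_shift n hn _ i (Finset.mem_range.1 hi).le P Q

/-- Key computation for Theorem 2: the Hermitian inner product of the two types of
generators of `D` reduces to `-⟨[c·(ν+ν̄)·g₁^{⊥h}]ₙ, [s·g₂^{⊥h}]ₙ⟩_h`. -/
theorem herm_inner_generators (n : ℕ) (hn : Odd n) (g₁ g₂ ν : Polynomial F4)
    (hg₁m : g₁.Monic) (hg₁d : g₁ ∣ X ^ n - 1)
    (hg₂m : g₂.Monic) (hg₂d : g₂ ∣ X ^ n - 1) :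
    ∀ c s : Polynomial F4,
      hermInner2
        (coeffVec n (-(conjT n ν) * c * dualGen n g₁), coeffVec n (c * dualGen n g₁))
        (coeffVec n (s * dualGen n g₂), coeffVec n (-(conjT n ν) * s * dualGen n g₂)) =
      -(hermInner (coeffVec n (c * (ν + conjT n ν) * dualGen n g₁))
          (coeffVec n (s * dualGen n g₂))) := by
  intro c s
  have e1 : -(conjT n ν) * c * dualGen n g₁ = -(c * conjT n ν * dualGen n g₁) := by ring
  have e2 : -(conjT n ν) * s * dualGen n g₂ = -(conjT n ν * (s * dualGen n g₂)) := by ring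
  have e3 : c * (ν + conjT n ν) * dualGen n g₁
      = ν * (c * dualGen n g₁) + c * conjT n ν * dualGen n g₁ := by ring
  unfold hermInner2
  simp only
  rw [e1, e2, e3, cv_neg, cv_neg, hi_neg_left, hi_neg_right, hi_adj n hn.pos, cv_add, hi_add_left]
  ring

end
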